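/- arXiv:0706.0089 — 2 statements merged into one kernel-verified Lean document; each statement's English description precedes it below -/
import Mathlib

section
/- For every n ≥ 2, the spin extension S̃_n is a finite group of order 2·n!. -/
open Equiv

/-- Generator `z` as an element of the free group. -/
def zF (n : ℕ) : FreeGroup (Fin (n-1) ⊕ Unit) := FreeGroup.of (Sum.inr ())

/-- Generator `τ̃ᵢ` as an element of the free group. -/
def tF (n : ℕ) (i : Fin (n-1)) : FreeGroup (Fin (n-1) ⊕ Unit) := FreeGroup.of (Sum.inl i)

/-- Relations of the spin extension of the symmetric group. -/
def spinRels (n : ℕ) : Set (FreeGroup (Fin (n-1) ⊕ Unit)) :=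
  {zF n * zF n} ∪
  {w | ∃ i : Fin (n-1), w = zF n * tF n i * (tF n i * zF n)⁻¹} ∪
  {w | ∃ i : Fin (n-1), w = tF n i * tF n i * (zF n)⁻¹} ∪
  {w | ∃ i j : Fin (n-1), 1 < |(i : ℤ) - (j : ℤ)| ∧ w = tF n i * tF n j * (zF n * tF n j * tF n i)⁻¹} ∪
  {w | ∃ i j : Fin (n-1), (j : ℕ) = (i : ℕ) + 1 ∧
        w = tF n i * tF n j * tF n i * (tF n j * tF n i * tF n j)⁻¹}

/-- The spin extension `S̃ₙ` of the symmetric group, as a presented group. -/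
abbrev SpinSym (n : ℕ) := PresentedGroup (spinRels n)

/-- The central element `z` of `S̃ₙ`. -/
def zt (n : ℕ) : SpinSym n := PresentedGroup.of (Sum.inr ())

/-- The generator `τ̃ᵢ` of `S̃ₙ`. -/
def tt (n : ℕ) (i : Fin (n-1)) : SpinSym n := PresentedGroup.of (Sum.inl i)

/-- `i` as an element of `Fin n`. -/
def finL (n : ℕ) (i : Fin (n-1)) : Fin n := ⟨i, by have := i.2; omega⟩

/-- `i+1` as an element of `Fin n`. -/
def finR (n : ℕ) (i : Fin (n-1)) : Fin n := ⟨(i : ℕ) + 1, by have := i.2; omega⟩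

/-- `τ̃ₖ` for a natural number index, `1` out of range. -/
def ttN (n : ℕ) (k : ℕ) : SpinSym n := if h : k < n - 1 then tt n ⟨k, h⟩ else 1

/-- For `i ≤ j`, the word `τ̃ᵢ·τ̃ᵢ₊₁⋯τ̃ⱼ₋₂·τ̃ⱼ₋₁·τ̃ⱼ₋₂⋯τ̃ᵢ₊₁·τ̃ᵢ` (equal to `1` when `i = j`). -/
def ttilCore (n i j : ℕ) : SpinSym n :=
  (((List.range' i (j - i)) ++ (List.range' i (j - 1 - i)).reverse).map (ttN n)).prod

/-- The lifted transpositions `τ̃_{i,j}`, with `τ̃_{j,i} = z·τ̃_{i,j}` for `i < j`,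
and `τ̃_{k,k} = 1`. -/
def ttil (n i j : ℕ) : SpinSym n := if j < i then zt n * ttilCore n j i else ttilCore n i j

/-!
Sending `z` to `1` and `τ̃ᵢ` to the transposition `(i, i + 1)` identifies `S̃ₙ / ⟨z⟩` with `Sₙ`:
the quotient surjects onto `Sₙ`, and it satisfies the Coxeter relations of type `A`, which bound its
order by `n!`, since the group generated by `t₀, …, tₘ` is covered by the `m + 2` cosets
`⟨t₀, …, tₘ₋₁⟩ * (tₘ * tₘ₋₁ * ⋯ * tₖ)`. It remains to see that `z` has order exactly `2`: for the
quadratic form `-(x ⬝ᵥ x) / 2`, the roots `eᵢ - eᵢ₊₁` satisfy the spin relations inside the Clifford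
algebra, with `z` acting as `-1`.
-/

open CliffordAlgebra Cardinal
open scoped Pointwise Nat

/-- The defining relations of the spin extension, for elements `t 0, …, t (m - 1)` and `z` of a
monoid; that `z` commutes with each `t i` follows from `t i * t i = z`. For `z = 1` these are the
Coxeter relations of type `A`. -/
structure IsSpinSystem {G : Type*} [Monoid G] {m : ℕ} (t : Fin m → G) (z : G) : Prop where
  mul_self_eq_one : z * z = 1
  mul_self (i : Fin m) : t i * t i = z
  anticomm {i j : Fin m} : 1 < |(i : ℤ) - (j : ℤ)| → t i * t j = z * t j * t i
  braid {i j : Fin m} : (j : ℕ) = (i : ℕ) + 1 → t i * t j * t i = t j * t i * t j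

namespace IsSpinSystem

variable {G H : Type*} [Monoid G] [Monoid H] {m : ℕ} {t : Fin m → G} {z : G}

lemma commute (h : IsSpinSystem t z) (i : Fin m) : Commute z (t i) := by
  rw [← h.mul_self i]
  exact (Commute.refl (t i)).mul_left (Commute.refl (t i))

lemma map (h : IsSpinSystem t z) (f : G →* H) : IsSpinSystem (f ∘ t) (f z) where
  mul_self_eq_one := by rw [← map_mul, h.mul_self_eq_one, map_one]
  mul_self i := by simp only [Function.comp_apply, ← map_mul, h.mul_self]
  anticomm hij := by simp only [Function.comp_apply, ← map_mul, h.anticomm hij]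
  braid hij := by simp only [Function.comp_apply, ← map_mul, h.braid hij]

lemma of_map {f : G →* H} (hf : Function.Injective f) (h : IsSpinSystem (f ∘ t) (f z)) :
    IsSpinSystem t z where
  mul_self_eq_one := hf (by simpa only [map_mul, map_one] using h.mul_self_eq_one)
  mul_self i := hf ((map_mul f _ _).trans (h.mul_self i))
  anticomm hij := hf (by simpa only [map_mul] using! h.anticomm hij)
  braid hij := hf (by simpa only [map_mul] using! h.braid hij)

lemma init {t : Fin (m + 1) → G} (h : IsSpinSystem t z) : IsSpinSystem (Fin.init t) z where
  mul_self_eq_one := h.mul_self_eq_one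
  mul_self i := h.mul_self i.castSucc
  anticomm hij := h.anticomm hij
  braid hij := h.braid hij

end IsSpinSystem

section CosetEnumeration

variable {G : Type*} [Group G] {m : ℕ}

/-- The standard parabolic subgroup generated by all members of the family `t` but the last. -/
def parabolic (t : Fin (m + 1) → G) : Subgroup G :=
  Subgroup.closure (Set.range (Fin.init t))

/-- The words `1`, `t (m - 1)`, `t (m - 1) * t (m - 2)`, …, `t (m - 1) * ⋯ * t 0`. When `t`
satisfies the Coxeter relations of type `A`, they represent all right cosets of the standard
parabolic subgroup in the subgroup generated by `t`. -/
def descendingWords : {m : ℕ} → (Fin m → G) → Set G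
  | 0, _ => {1}
  | m + 1, t => insert 1 (t (Fin.last m) • descendingWords (Fin.init t))

lemma one_mem_descendingWords : ∀ {m : ℕ} (t : Fin m → G), 1 ∈ descendingWords t
  | 0, _ => rfl
  | _ + 1, _ => Set.mem_insert _ _

lemma last_mul_mem_descendingWords {t : Fin (m + 1) → G} {w : G}
    (hw : w ∈ descendingWords (Fin.init t)) : t (Fin.last m) * w ∈ descendingWords t :=
  Or.inr (Set.smul_mem_smul_set hw)

lemma mk_descendingWords_le : ∀ {m : ℕ} (t : Fin m → G), #(descendingWords t) ≤ (m + 1 : ℕ)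
  | 0, _ => by simp [descendingWords]
  | m + 1, t => calc
      #(descendingWords t) ≤ #(t (Fin.last m) • descendingWords (Fin.init t) : Set G) + 1 :=
        mk_insert_le
      _ ≤ (m + 1 : ℕ) + 1 := by grw [mk_smul_set, mk_descendingWords_le]
      _ = (m + 1 + 1 : ℕ) := by push_cast; rfl

lemma parabolic_le_closure_range (t : Fin (m + 1) → G) :
    parabolic t ≤ Subgroup.closure (Set.range t) :=
  Subgroup.closure_mono (Set.range_comp_subset_range Fin.castSucc t)

lemma descendingWords_subset_closure : ∀ {m : ℕ} (t : Fin m → G),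
    descendingWords t ⊆ Subgroup.closure (Set.range t)
  | 0, _ => by simp [descendingWords]
  | m + 1, t => by
    rintro _ (rfl | ⟨w, hw, rfl⟩)
    · exact one_mem _
    · exact mul_mem (Subgroup.subset_closure ⟨_, rfl⟩)
        (parabolic_le_closure_range t (descendingWords_subset_closure (Fin.init t) hw))

lemma apply_mem_parabolic_mul_descendingWords (t : Fin (m + 1) → G) (j : Fin (m + 1)) :
    t j ∈ (parabolic t : Set G) * descendingWords t := by
  cases j using Fin.lastCases with
  | last =>
    exact ⟨1, one_mem _, _, last_mul_mem_descendingWords (one_mem_descendingWords _), by simp⟩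
  | cast i =>
    exact ⟨t i.castSucc, Subgroup.subset_closure ⟨i, rfl⟩, 1, one_mem_descendingWords t, mul_one _⟩

namespace IsSpinSystem

lemma commute_last {t : Fin (m + 2) → G} (h : IsSpinSystem t 1) {g : G}
    (hg : g ∈ parabolic (Fin.init t)) : Commute g (t (Fin.last (m + 1))) := by
  suffices parabolic (Fin.init t) ≤ Subgroup.centralizer {t (Fin.last (m + 1))} from
    Subgroup.mem_centralizer_singleton_iff.mp (this hg)
  refine (Subgroup.closure_le _).mpr ?_
  rintro _ ⟨i, rfl⟩
  have hfar : 1 < |((i.castSucc.castSucc : ℕ) : ℤ) - ((Fin.last (m + 1) : ℕ) : ℤ)| := by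
    simp only [Fin.val_last, Fin.val_castSucc, lt_abs]
    omega
  exact Subgroup.mem_centralizer_singleton_iff.mpr (by simpa only [one_mul] using! h.anticomm hfar)

lemma mul_last_mem_parabolic_mul_descendingWords {t : Fin (m + 1) → G} (h : IsSpinSystem t 1)
    {w : G} (hw : w ∈ descendingWords t) :
    w * t (Fin.last m) ∈ (parabolic t : Set G) * descendingWords t := by
  obtain rfl | ⟨s, hs, rfl⟩ := hw
  · rw [one_mul]
    exact apply_mem_parabolic_mul_descendingWords t _
  change t (Fin.last m) * s * t (Fin.last m) ∈ _
  obtain rfl | hs1 := eq_or_ne s 1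
  · rw [mul_one, h.mul_self]
    exact ⟨1, one_mem _, 1, one_mem_descendingWords t, mul_one 1⟩
  cases m with
  | zero => exact absurd hs hs1
  | succ k =>
    obtain ⟨v, hv, rfl⟩ := hs.resolve_left hs1
    let a := t (Fin.last (k + 1))
    let b := Fin.init t (Fin.last k)
    have hcomm : Commute v a := h.commute_last (descendingWords_subset_closure _ hv)
    have hbraid : b * a * b = a * b * a := h.braid rfl
    refine ⟨b, Subgroup.subset_closure ⟨_, rfl⟩, a * (b * v),
      last_mul_mem_descendingWords (last_mul_mem_descendingWords hv), ?_⟩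
    calc b * (a * (b * v)) = b * a * b * v := by simp only [mul_assoc]
      _ = a * b * (a * v) := by rw [hbraid, mul_assoc]
      _ = a * (b * v) * a := by rw [← hcomm.eq]; simp only [mul_assoc]

lemma mul_mem_parabolic_mul_descendingWords {t : Fin (m + 1) → G} (h : IsSpinSystem t 1)
    {w : G} (hw : w ∈ descendingWords t) (j : Fin (m + 1)) :
    w * t j ∈ (parabolic t : Set G) * descendingWords t := by
  induction m generalizing w with
  | zero =>
    obtain rfl : j = Fin.last 0 := Fin.fin_one_eq_zero j
    exact h.mul_last_mem_parabolic_mul_descendingWords hw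
  | succ k ih =>
    cases j using Fin.lastCases with
    | last => exact h.mul_last_mem_parabolic_mul_descendingWords hw
    | cast i =>
      obtain rfl | ⟨s, hs, rfl⟩ := hw
      · rw [one_mul]
        exact apply_mem_parabolic_mul_descendingWords t _
      let a := t (Fin.last (k + 1))
      obtain ⟨g, hg, v, hv, hgv : g * v = s * t i.castSucc⟩ := ih h.init hs i
      refine ⟨g, parabolic_le_closure_range (Fin.init t) hg, a * v,
        last_mul_mem_descendingWords hv, ?_⟩
      calc g * (a * v) = a * (g * v) := by rw [← mul_assoc, (h.commute_last hg).eq, mul_assoc]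
        _ = a * s * t i.castSucc := by rw [hgv, mul_assoc]

lemma closure_range_subset_parabolic_mul {t : Fin (m + 1) → G} (h : IsSpinSystem t 1) :
    (Subgroup.closure (Set.range t) : Set G) ⊆ (parabolic t : Set G) * descendingWords t := by
  have mul_apply_mem : ∀ x ∈ (parabolic t : Set G) * descendingWords t, ∀ j,
      x * t j ∈ (parabolic t : Set G) * descendingWords t := by
    rintro _ ⟨g, hg, w, hw, rfl⟩ j
    obtain ⟨g', hg', w', hw', hgw⟩ := h.mul_mem_parabolic_mul_descendingWords hw j
    exact ⟨g * g', mul_mem hg hg', w', hw', by simp only [mul_assoc, ← hgw]⟩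
  intro g hg
  induction hg using Subgroup.closure_induction_right with
  | one => exact ⟨1, one_mem _, 1, one_mem_descendingWords t, mul_one 1⟩
  | mul_right x _ y hy ih =>
    obtain ⟨j, rfl⟩ := hy
    exact mul_apply_mem x ih j
  | mul_inv_cancel x _ y hy ih =>
    obtain ⟨j, rfl⟩ := hy
    rw [inv_eq_of_mul_eq_one_left (h.mul_self j)]
    exact mul_apply_mem x ih j

theorem mk_closure_range_le {t : Fin m → G} (h : IsSpinSystem t 1) :
    #(Subgroup.closure (Set.range t)) ≤ (m + 1)! := by
  induction m with
  | zero => simp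
  | succ m ih => calc
      #(Subgroup.closure (Set.range t)) ≤
          #((parabolic t : Set G) * descendingWords t : Set G) :=
        mk_le_mk_of_subset h.closure_range_subset_parabolic_mul
      _ ≤ #(parabolic t) * #(descendingWords t) := mk_mul_le
      _ ≤ (m + 1)! * (m + 1 + 1 : ℕ) := mul_le_mul' (ih h.init) (mk_descendingWords_le t)
      _ = (m + 1 + 1)! := by rw [Nat.factorial_succ (m + 1), mul_comm, Nat.cast_mul]

end IsSpinSystem

end CosetEnumeration

lemma swap_braid {α : Type*} [DecidableEq α] {a b c : α} (hab : a ≠ b) (hbc : b ≠ c)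
    (hac : a ≠ c) : swap a b * swap b c * swap a b = swap b c * swap a b * swap b c := calc
  swap a b * swap b c * swap a b = swap a c := by
    rw [swap_comm a b, swap_comm b c, swap_mul_swap_mul_swap hbc.symm hac.symm]
  _ = swap b c * swap a b * swap b c := by rw [swap_mul_swap_mul_swap hab hac, swap_comm]

section Clifford

variable {R M : Type*} [CommRing R] [AddCommGroup M] [Module R M] {Q : QuadraticForm R M}
  {m : ℕ} {v : Fin m → M}

lemma isSpinSystem_ι (hself : ∀ i, Q (v i) = -1)
    (hfar : ∀ i j : Fin m, 1 < |(i : ℤ) - (j : ℤ)| → Q.IsOrtho (v i) (v j))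
    (hadj : ∀ i j : Fin m, (j : ℕ) = (i : ℕ) + 1 → QuadraticMap.polar Q (v i) (v j) = 1) :
    IsSpinSystem (fun i => ι Q (v i)) (-1) where
  mul_self_eq_one := by rw [neg_mul_neg, one_mul]
  mul_self i := by rw [ι_sq_scalar, hself, map_neg, map_one]
  anticomm hij := by rw [ι_mul_ι_comm_of_isOrtho (hfar _ _ hij), neg_one_mul, neg_mul]
  braid {i j} hij := by
    rw [ι_mul_ι_mul_ι, ι_mul_ι_mul_ι, QuadraticMap.polar_comm Q (v j), hself, hself, hadj i j hij,
      one_smul, one_smul, neg_one_smul, neg_one_smul, sub_neg_eq_add, sub_neg_eq_add, add_comm]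

/-- A vector of square `-1` as a unit of the Clifford algebra. -/
def ιUnit (x : M) (hx : Q x = -1) : (CliffordAlgebra Q)ˣ where
  val := ι Q x
  inv := -ι Q x
  val_inv := by rw [mul_neg, ι_sq_scalar, hx, map_neg, map_one, neg_neg]
  inv_val := by rw [neg_mul, ι_sq_scalar, hx, map_neg, map_one, neg_neg]

end Clifford

namespace SpinSym

variable {n : ℕ}

lemma isSpinSystem_tt (n : ℕ) : IsSpinSystem (tt n) (zt n) where
  mul_self_eq_one :=
    PresentedGroup.one_of_mem (rels := spinRels n) (x := zF n * zF n) (by simp [spinRels])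
  mul_self i :=
    PresentedGroup.mk_eq_mk_of_mul_inv_mem (rels := spinRels n)
      (x := tF n i * tF n i) (y := zF n) (Or.inl <| Or.inl <| Or.inr ⟨i, rfl⟩)
  anticomm {i j} hij :=
    PresentedGroup.mk_eq_mk_of_mul_inv_mem (rels := spinRels n)
      (x := tF n i * tF n j) (y := zF n * tF n j * tF n i) (Or.inl <| Or.inr ⟨i, j, hij, rfl⟩)
  braid {i j} hij :=
    PresentedGroup.mk_eq_mk_of_mul_inv_mem (rels := spinRels n)
      (x := tF n i * tF n j * tF n i) (y := tF n j * tF n i * tF n j) (Or.inr ⟨i, j, hij, rfl⟩)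

section Lift

variable {H : Type*} [Group H] {t : Fin (n - 1) → H} {z : H}

/-- The universal property of `S̃ₙ`: the homomorphism sending `τ̃ᵢ` to `t i` and `z` to `z`. -/
def lift (h : IsSpinSystem t z) : SpinSym n →* H :=
  PresentedGroup.toGroup (f := Sum.elim t fun _ => z) <| by
    rintro _ ((((rfl | ⟨i, rfl⟩) | ⟨i, rfl⟩) | ⟨i, j, hij, rfl⟩) | ⟨i, j, hij, rfl⟩)
    · simpa [zF] using h.mul_self_eq_one
    · simpa [zF, tF, -mul_inv_rev, mul_inv_eq_one] using (h.commute i).eq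
    · simpa [zF, tF, -mul_inv_rev, mul_inv_eq_one] using h.mul_self i
    · simpa [zF, tF, -mul_inv_rev, mul_inv_eq_one] using h.anticomm hij
    · simpa [zF, tF, -mul_inv_rev, mul_inv_eq_one] using h.braid hij

lemma lift_tt (h : IsSpinSystem t z) (i : Fin (n - 1)) : lift h (tt n i) = t i :=
  PresentedGroup.toGroup.of _

lemma lift_zt (h : IsSpinSystem t z) : lift h (zt n) = z :=
  PresentedGroup.toGroup.of _

end Lift

/-- The quadratic form `x ↦ -(x ⬝ᵥ x) / 2`, normalised so that the roots `eᵢ - eᵢ₊₁` have square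
`-1` in the Clifford algebra. -/
def rootForm (n : ℕ) : QuadraticForm ℚ (Fin n → ℚ) :=
  LinearMap.BilinMap.toQuadraticMap ((-1 / 2 : ℚ) • dotProductBilin ℚ ℚ)

/-- The simple root `eᵢ - eᵢ₊₁` of type `A`. -/
def simpleRoot (n : ℕ) (i : Fin (n - 1)) : Fin n → ℚ :=
  Pi.single (finL n i) 1 - Pi.single (finR n i) 1

lemma rootForm_apply (x : Fin n → ℚ) : rootForm n x = -1 / 2 * (x ⬝ᵥ x) := rfl

lemma polar_rootForm (x y : Fin n → ℚ) : QuadraticMap.polar (rootForm n) x y = -(x ⬝ᵥ y) := by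
  simp only [QuadraticMap.polar, rootForm_apply, add_dotProduct, dotProduct_add,
    dotProduct_comm y x]
  ring

lemma simpleRoot_dotProduct (i j : Fin (n - 1)) :
    simpleRoot n i ⬝ᵥ simpleRoot n j =
      if i = j then 2 else if (i : ℕ) + 1 = j ∨ (j : ℕ) + 1 = i then -1 else 0 := by
  simp only [simpleRoot, sub_dotProduct, dotProduct_sub, single_one_dotProduct, Pi.single_apply,
    finL, finR, Fin.ext_iff]
  split_ifs <;> first | omega | norm_num

lemma rootForm_simpleRoot (i : Fin (n - 1)) : rootForm n (simpleRoot n i) = -1 := by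
  rw [rootForm_apply, simpleRoot_dotProduct, if_pos rfl]
  norm_num

lemma isOrtho_simpleRoot {i j : Fin (n - 1)} (hij : 1 < |(i : ℤ) - (j : ℤ)|) :
    (rootForm n).IsOrtho (simpleRoot n i) (simpleRoot n j) := by
  rw [lt_abs] at hij
  rw [← QuadraticMap.isOrtho_polarBilin, QuadraticMap.polarBilin_apply_apply, polar_rootForm,
    simpleRoot_dotProduct, if_neg (by rintro rfl; omega), if_neg (by omega), neg_zero]

lemma polar_simpleRoot {i j : Fin (n - 1)} (hij : (j : ℕ) = (i : ℕ) + 1) :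
    QuadraticMap.polar (rootForm n) (simpleRoot n i) (simpleRoot n j) = 1 := by
  rw [polar_rootForm, simpleRoot_dotProduct, if_neg (by rintro rfl; omega),
    if_pos (Or.inl hij.symm), neg_neg]

lemma isSpinSystem_ιUnit_simpleRoot (n : ℕ) :
    IsSpinSystem (fun i => ιUnit (simpleRoot n i) (rootForm_simpleRoot i)) (-1) :=
  .of_map (f := Units.coeHom _) Units.val_injective <|
    isSpinSystem_ι (v := simpleRoot n) rootForm_simpleRoot
      (fun _ _ => isOrtho_simpleRoot) (fun _ _ => polar_simpleRoot)

lemma zt_ne_one (n : ℕ) : zt n ≠ 1 := by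
  intro hz
  have hunit : (-1 : (CliffordAlgebra (rootForm n))ˣ) = 1 := by
    rw [← lift_zt (isSpinSystem_ιUnit_simpleRoot n), hz, map_one]
  have hval : (-1 : CliffordAlgebra (rootForm n)) = 1 := congrArg Units.val hunit
  have : Invertible (2 : ℚ) := invertibleOfNonzero two_ne_zero
  have : CharZero (CliffordAlgebra (rootForm n)) := algebraRat.charZero _
  norm_num at hval

lemma orderOf_zt (n : ℕ) : orderOf (zt n) = 2 :=
  orderOf_eq_prime ((pow_two _).trans (isSpinSystem_tt n).mul_self_eq_one) (zt_ne_one n)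

lemma zt_mem_center (n : ℕ) : zt n ∈ Subgroup.center (SpinSym n) := by
  rw [← Subgroup.centralizer_univ, ← Subgroup.coe_top, ← PresentedGroup.closure_range_of,
    Subgroup.centralizer_closure, Subgroup.mem_centralizer_iff]
  rintro _ ⟨i | _, rfl⟩
  · exact ((isSpinSystem_tt n).commute i).symm
  · rfl

instance normal_zpowers_zt : (Subgroup.zpowers (zt n)).Normal where
  conj_mem _ hx g := by
    rwa [Subgroup.mem_center_iff.mp (Subgroup.zpowers_le.mpr (zt_mem_center n) hx) g,
      mul_inv_cancel_right]

lemma mk_quotient_zpowers_zt_le (n : ℕ) : #(SpinSym n ⧸ Subgroup.zpowers (zt n)) ≤ n ! := by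
  let π := QuotientGroup.mk' (Subgroup.zpowers (zt n))
  have hz : π (zt n) = 1 := (QuotientGroup.eq_one_iff _).mpr (Subgroup.mem_zpowers _)
  have hsystem : IsSpinSystem (π ∘ tt n) 1 := hz ▸ (isSpinSystem_tt n).map π
  have htop : Subgroup.closure (Set.range (π ∘ tt n)) = ⊤ := by
    rw [eq_top_iff, ← MonoidHom.range_eq_top.mpr (QuotientGroup.mk'_surjective _),
      MonoidHom.range_eq_map, ← PresentedGroup.closure_range_of, MonoidHom.map_closure,
      Subgroup.closure_le]
    rintro _ ⟨_, ⟨i | _, rfl⟩, rfl⟩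
    · exact Subgroup.subset_closure ⟨i, rfl⟩
    · exact hz ▸ one_mem _
  have hle := hsystem.mk_closure_range_le
  have hfactorial : (n - 1 + 1)! = n ! := by cases n <;> rfl
  rwa [htop, mk_congr Subgroup.topEquiv.toEquiv, hfactorial] at hle

lemma isSpinSystem_swap (n : ℕ) : IsSpinSystem (fun i => swap (finL n i) (finR n i)) 1 where
  mul_self_eq_one := mul_one 1
  mul_self i := swap_mul_self _ _
  anticomm {i j} hij := by
    rw [lt_abs] at hij
    have hnodup : [finL n i, finR n i, finL n j, finR n j].Nodup := by
      simp only [finL, finR, List.nodup_cons, List.mem_cons, List.not_mem_nil, List.nodup_nil,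
        Fin.mk.injEq, or_false, not_or, not_false_eq_true, and_true]
      omega
    rw [one_mul]
    exact (Perm.disjoint_swap_swap hnodup).commute
  braid {i j} hij := by
    have hj : finL n j = finR n i := Fin.ext hij
    rw [hj]
    refine swap_braid (Fin.ne_of_val_ne ?_) (Fin.ne_of_val_ne ?_) (Fin.ne_of_val_ne ?_) <;>
      simp only [finL, finR] <;> omega

lemma lift_swap_surjective (n : ℕ) : Function.Surjective (lift (isSpinSystem_swap n)) := by
  obtain _ | m := n
  · exact Function.surjective_to_subsingleton _
  rw [← MonoidHom.mrange_eq_top, eq_top_iff, ← Perm.mclosure_swap_castSucc_succ m,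
    Submonoid.closure_le]
  rintro _ ⟨i, rfl⟩
  exact ⟨tt (m + 1) i, lift_tt ..⟩

lemma factorial_le_mk_quotient_zpowers_zt (n : ℕ) :
    n ! ≤ #(SpinSym n ⧸ Subgroup.zpowers (zt n)) := by
  have hker : Subgroup.zpowers (zt n) ≤ (lift (isSpinSystem_swap n)).ker :=
    Subgroup.zpowers_le.mpr (lift_zt _)
  have := mk_le_of_surjective
    (QuotientGroup.lift_surjective_of_surjective _ _ (lift_swap_surjective n) hker)
  rwa [← Nat.cast_card, Nat.card_perm, Nat.card_fin] at this

lemma card_quotient_zpowers_zt (n : ℕ) :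
    Nat.card (SpinSym n ⧸ Subgroup.zpowers (zt n)) = n ! := by
  rw [Nat.card, (mk_quotient_zpowers_zt_le n).antisymm (factorial_le_mk_quotient_zpowers_zt n),
    toNat_natCast]

end SpinSym

theorem spin_card (n : ℕ) (hn : 2 ≤ n) :
    Nat.card (SpinSym n) = 2 * n.factorial := by
  rw [Subgroup.card_eq_card_quotient_mul_card_subgroup (Subgroup.zpowers (zt n)),
    SpinSym.card_quotient_zpowers_zt, Nat.card_zpowers, SpinSym.orderOf_zt, mul_comm]
end

section
/- For n ≥ 4, the central extension 1 → Z/2Z → S̃_n → S_n → 1 is non-trivial: there is no group homomorphism s : S_n → S̃_n with p ∘ s = id_{S_n}. -/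
open Equiv

/-!
A section sends the transposition `(0 1)` to an involution lying over `(0 1)`. The elements over
`(0 1)` are `τ̃₀` times a power of the central element `z`, and each of them squares to `z`, because
`τ̃₀² = z` and `z² = 1`. It remains to see that the kernel of `p` is generated by `z`, and that
`z ≠ 1`.

Modulo `z` the relations of `S̃ₙ` become the Coxeter relations of type `A`, so the first claim is
the Coxeter presentation of `Sₙ`. Its injectivity is an induction on the rank: every element is the
product of an ascending run `sₖ sₖ₊₁ ⋯`, which is read off from the image of the last point, and an
element of the Coxeter group of smaller rank, which fixes the last point.

For the second claim, `S̃ₙ` acts on a Clifford algebra with `z` acting as `-1`: let `τ̃ᵢ` act as the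
simple root `eᵢ - eᵢ₊₁`, normalised to have square `-1`.
-/

section CoxeterRelations

variable {G : Type*} [Group G] {a b : G}

theorem mul_sq_eq_one_iff_commute (ha : a * a = 1) (hb : b * b = 1) :
    (a * b) ^ 2 = 1 ↔ Commute a b := by
  rw [sq, mul_eq_one_iff_eq_inv, mul_inv_rev, inv_eq_of_mul_eq_one_left ha,
    inv_eq_of_mul_eq_one_left hb]
  rfl

theorem mul_pow_three_eq_one_iff_braid (ha : a * a = 1) (hb : b * b = 1) :
    (a * b) ^ 3 = 1 ↔ a * b * a = b * a * b := by
  have hpow : (a * b) ^ 3 = a * b * a * (b * a * b) := by simp only [pow_three, mul_assoc]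
  have hinv : (b * a * b)⁻¹ = b * a * b := by
    simp only [mul_inv_rev, inv_eq_of_mul_eq_one_left ha, inv_eq_of_mul_eq_one_left hb, mul_assoc]
  rw [hpow, mul_eq_one_iff_eq_inv, hinv]

theorem isLiftable_typeA_iff {m : ℕ} {f : Fin m → G} :
    (CoxeterMatrix.A m).IsLiftable f ↔
      (∀ i, f i * f i = 1) ∧
      (∀ i j : Fin m, (i : ℕ) + 1 < j → Commute (f i) (f j)) ∧
      ∀ i j : Fin m, (j : ℕ) = i + 1 → f i * f j * f i = f j * f i * f j := by
  have hM (i j : Fin m) : CoxeterMatrix.A m i j =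
      if i = j then 1 else if (j : ℕ) + 1 = i ∨ (i : ℕ) + 1 = j then 3 else 2 := rfl
  constructor
  · intro h
    have hsq (i : Fin m) : f i * f i = 1 := by simpa [hM] using h i i
    refine ⟨hsq, fun i j hij => ?_, fun i j hij => ?_⟩
    · rw [← mul_sq_eq_one_iff_commute (hsq i) (hsq j)]
      have h2 := h i j
      rwa [hM, if_neg (by omega), if_neg (by omega)] at h2
    · rw [← mul_pow_three_eq_one_iff_braid (hsq i) (hsq j)]
      have h3 := h i j
      rwa [hM, if_neg (by omega), if_pos (by omega)] at h3
  · rintro ⟨hsq, hcomm, hbraid⟩ i j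
    rw [hM]
    split_ifs with heq hadj
    · rw [heq, hsq, pow_one]
    · rw [mul_pow_three_eq_one_iff_braid (hsq i) (hsq j)]
      rcases hadj with hji | hij
      · exact (hbraid j i hji.symm).symm
      · exact hbraid i j hij.symm
    · rw [mul_sq_eq_one_iff_commute (hsq i) (hsq j)]
      rcases lt_or_gt_of_ne (Fin.val_ne_of_ne heq) with hij | hji
      · exact hcomm i j (by omega)
      · exact (hcomm j i (by omega)).symm

end CoxeterRelations

/-- The Coxeter group of type `A m`, with simple reflections indexed by `Fin m`. -/
abbrev CoxeterA (m : ℕ) : Type := (CoxeterMatrix.A m).Group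

namespace CoxeterA

variable {m : ℕ}

/-- The simple reflection `sᵢ` of the Coxeter group of type `A m`. -/
abbrev simple (i : Fin m) : CoxeterA m := (CoxeterMatrix.A m).toCoxeterSystem.simple i

theorem isLiftable_simple : (CoxeterMatrix.A m).IsLiftable (simple (m := m)) :=
  (CoxeterMatrix.A m).toCoxeterSystem.simple_mul_simple_pow

theorem simple_mul_self (i : Fin m) : simple i * simple i = 1 :=
  (isLiftable_typeA_iff.mp isLiftable_simple).1 i

theorem commute_simple {i j : Fin m} (hij : (i : ℕ) + 1 < j) : Commute (simple i) (simple j) :=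
  (isLiftable_typeA_iff.mp isLiftable_simple).2.1 i j hij

theorem simple_braid {i j : Fin m} (hij : (j : ℕ) = i + 1) :
    simple i * simple j * simple i = simple j * simple i * simple j :=
  (isLiftable_typeA_iff.mp isLiftable_simple).2.2 i j hij

theorem isLiftable_swap :
    (CoxeterMatrix.A m).IsLiftable fun i : Fin m => swap i.castSucc i.succ := by
  refine isLiftable_typeA_iff.mpr ⟨fun i => swap_mul_self _ _, fun i j hij => ?_, fun i j hij => ?_⟩
  · refine (Perm.disjoint_swap_swap ?_).commute
    simp only [List.nodup_cons, List.mem_cons, List.not_mem_nil, List.nodup_nil, or_false,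
      not_false_eq_true, and_true, not_or, Fin.ext_iff, Fin.val_castSucc, Fin.val_succ]
    omega
  · have hmid : j.castSucc = i.succ := Fin.ext hij
    have hne : i.castSucc ≠ j.succ := (i.castSucc_lt_succ.trans (hmid ▸ j.castSucc_lt_succ)).ne
    rw [hmid, swap_mul_swap_mul_swap i.castSucc_lt_succ.ne hne, swap_comm i.castSucc,
      swap_comm i.succ j.succ, swap_mul_swap_mul_swap (hmid ▸ j.castSucc_lt_succ.ne') hne.symm,
      swap_comm]

/-- The homomorphism from the Coxeter group of type `A m` to the symmetric group that sends `sᵢ` to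
the adjacent transposition `(i, i + 1)`. -/
def toPerm (m : ℕ) : CoxeterA m →* Perm (Fin (m + 1)) :=
  (CoxeterMatrix.A m).toCoxeterSystem.lift ⟨_, isLiftable_swap⟩

theorem toPerm_simple (i : Fin m) : toPerm m (simple i) = swap i.castSucc i.succ :=
  CoxeterSystem.lift_apply_simple _ isLiftable_swap i

theorem toPerm_surjective (m : ℕ) : Function.Surjective (toPerm m) := by
  rw [← MonoidHom.mrange_eq_top, ← top_le_iff, ← Perm.mclosure_swap_castSucc_succ,
    Submonoid.closure_le]
  rintro _ ⟨i, rfl⟩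
  exact ⟨simple i, toPerm_simple i⟩

theorem isLiftable_simple_castSucc :
    (CoxeterMatrix.A m).IsLiftable fun i : Fin m => simple i.castSucc :=
  isLiftable_typeA_iff.mpr
    ⟨fun i => simple_mul_self i.castSucc, fun _ _ hij => commute_simple hij,
      fun _ _ hij => simple_braid hij⟩

/-- The homomorphism onto the standard parabolic subgroup of the Coxeter group of type `A (m + 1)`
generated by all simple reflections but the last. -/
def inclusion (m : ℕ) : CoxeterA m →* CoxeterA (m + 1) :=
  (CoxeterMatrix.A m).toCoxeterSystem.lift ⟨_, isLiftable_simple_castSucc⟩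

theorem inclusion_simple (i : Fin m) : inclusion m (simple i) = simple i.castSucc :=
  CoxeterSystem.lift_apply_simple _ isLiftable_simple_castSucc i

theorem toPerm_inclusion_castSucc (w : CoxeterA m) (x : Fin (m + 1)) :
    toPerm (m + 1) (inclusion m w) x.castSucc = (toPerm m w x).castSucc := by
  induction w using (CoxeterMatrix.A m).toCoxeterSystem.simple_induction_left with
  | one => simp only [map_one, Perm.one_apply]
  | mul_simple_left w i ih =>
    rw [map_mul, map_mul, map_mul, Perm.mul_apply, Perm.mul_apply, ih, inclusion_simple,
      toPerm_simple, toPerm_simple, (Fin.castSucc_injective _).map_swap, Fin.succ_castSucc]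

theorem toPerm_inclusion_last (w : CoxeterA m) :
    toPerm (m + 1) (inclusion m w) (Fin.last (m + 1)) = Fin.last (m + 1) := by
  induction w using (CoxeterMatrix.A m).toCoxeterSystem.simple_induction_left with
  | one => simp only [map_one, Perm.one_apply]
  | mul_simple_left w i ih =>
    rw [map_mul, map_mul, Perm.mul_apply, ih, inclusion_simple, toPerm_simple, Fin.succ_castSucc,
      swap_apply_of_ne_of_ne (Fin.castSucc_ne_last _).symm (Fin.castSucc_ne_last _).symm]

/-- The product `sₖ sₖ₊₁ ⋯ sₘ₋₁`, the representative of minimal length of the coset of elements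
whose permutation sends the last point to `k`. -/
def cosetRep (k : Fin (m + 1)) : CoxeterA m :=
  Fin.reverseInduction (motive := fun _ => CoxeterA m) 1 (fun i w => simple i * w) k

theorem cosetRep_last : cosetRep (Fin.last m) = 1 :=
  Fin.reverseInduction_last ..

theorem cosetRep_castSucc (i : Fin m) : cosetRep i.castSucc = simple i * cosetRep i.succ :=
  Fin.reverseInduction_castSucc ..

theorem toPerm_cosetRep_last (k : Fin (m + 1)) : toPerm m (cosetRep k) (Fin.last m) = k := by
  induction k using Fin.reverseInduction with
  | last => rw [cosetRep_last, map_one, Perm.one_apply]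
  | cast i ih =>
    rw [cosetRep_castSucc, map_mul, Perm.mul_apply, ih, toPerm_simple, swap_apply_right]

theorem commute_simple_cosetRep (i : Fin m) (k : Fin (m + 1)) (hik : i.succ < k) :
    Commute (simple i) (cosetRep k) := by
  induction k using Fin.reverseInduction with
  | last => rw [cosetRep_last]; exact Commute.one_right _
  | cast j ih =>
    rw [cosetRep_castSucc]
    exact (commute_simple hik).mul_right (ih (hik.trans j.castSucc_lt_succ))

theorem simple_succ_mul_cosetRep (i : Fin m) (k : Fin (m + 2)) (hki : k ≤ i.castSucc.castSucc) :
    simple i.succ * cosetRep k = cosetRep k * simple i.castSucc := by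
  induction k using Fin.reverseInduction with
  | last => exact absurd hki (Fin.castSucc_lt_last _).not_ge
  | cast j ih =>
    rw [cosetRep_castSucc]
    rcases (Fin.castSucc_le_castSucc_iff.mp hki).eq_or_lt with rfl | hji
    · have hcomm : Commute (simple i.castSucc) (cosetRep i.succ.succ) :=
        commute_simple_cosetRep _ _ (Fin.castSucc_lt_succ (i := i.succ))
      have hbraid : simple i.succ * simple i.castSucc * simple i.succ =
          simple i.castSucc * simple i.succ * simple i.castSucc :=
        (simple_braid (by simp)).symm
      rw [Fin.succ_castSucc, cosetRep_castSucc]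
      simp only [← mul_assoc]
      rw [hbraid, mul_assoc _ _ (cosetRep _), hcomm.eq, ← mul_assoc]
    · have hcomm : Commute (simple j) (simple i.succ) := commute_simple (Nat.succ_lt_succ hji)
      rw [← mul_assoc, ← hcomm.eq, mul_assoc, ih (Fin.succ_le_castSucc_iff.mpr hji), mul_assoc]

theorem exists_simple_mul_cosetRep (i : Fin (m + 1)) (k : Fin (m + 2)) :
    ∃ l u, simple i * cosetRep k = cosetRep l * inclusion m u := by
  rcases lt_trichotomy i.succ k with hik | rfl | hki
  · obtain ⟨i, rfl⟩ := Fin.exists_castSucc_eq.mpr (show i ≠ Fin.last m by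
      rintro rfl
      exact hik.not_ge (Fin.le_last k))
    exact ⟨k, simple i, by rw [inclusion_simple, (commute_simple_cosetRep _ k hik).eq]⟩
  · exact ⟨i.castSucc, 1, by rw [map_one, mul_one, cosetRep_castSucc]⟩
  · rcases (Fin.le_castSucc_iff.mpr hki).eq_or_lt with rfl | hki
    · exact ⟨i.succ, 1, by
        rw [cosetRep_castSucc, ← mul_assoc, simple_mul_self, one_mul, map_one, mul_one]⟩
    · obtain ⟨i, rfl⟩ := Fin.exists_succ_eq.mpr (show i ≠ 0 by
        rintro rfl
        exact hki.not_ge (Fin.zero_le k))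
      refine ⟨k, simple i, ?_⟩
      rw [inclusion_simple]
      exact simple_succ_mul_cosetRep i k (Fin.le_castSucc_iff.mpr hki)

theorem exists_eq_cosetRep_mul_inclusion (w : CoxeterA (m + 1)) :
    ∃ k u, w = cosetRep k * inclusion m u := by
  induction w using (CoxeterMatrix.A (m + 1)).toCoxeterSystem.simple_induction_left with
  | one => exact ⟨Fin.last _, 1, by rw [cosetRep_last, map_one, one_mul]⟩
  | mul_simple_left w i ih =>
    obtain ⟨k, u, rfl⟩ := ih
    obtain ⟨l, v, hlv⟩ := exists_simple_mul_cosetRep i k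
    exact ⟨l, v * u, by rw [← mul_assoc, hlv, map_mul, mul_assoc]⟩

theorem toPerm_injective (m : ℕ) : Function.Injective (toPerm m) := by
  rw [injective_iff_map_eq_one]
  induction m with
  | zero =>
    intro w _
    induction w using (CoxeterMatrix.A 0).toCoxeterSystem.simple_induction_left with
    | one => rfl
    | mul_simple_left _ i => exact i.elim0
  | succ m ih =>
    intro w hw
    obtain ⟨k, u, rfl⟩ := exists_eq_cosetRep_mul_inclusion w
    have hk : Fin.last (m + 1) = k := by
      simpa only [map_mul, Perm.mul_apply, toPerm_inclusion_last, toPerm_cosetRep_last,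
        Perm.one_apply] using (DFunLike.congr_fun hw (Fin.last (m + 1))).symm
    rw [← hk, cosetRep_last, one_mul] at hw ⊢
    have hu : toPerm m u = 1 := Equiv.ext fun x => Fin.castSucc_injective _ <| by
      rw [← toPerm_inclusion_castSucc, hw, Perm.one_apply, Perm.one_apply]
    rw [ih u hu, map_one]

end CoxeterA

/-- The Coxeter presentation of the symmetric group by adjacent transpositions. -/
noncomputable def permCoxeterSystem (m : ℕ) :
    CoxeterSystem (CoxeterMatrix.A m) (Perm (Fin (m + 1))) :=
  (CoxeterMatrix.A m).toCoxeterSystem.map <|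
    MulEquiv.ofBijective (CoxeterA.toPerm m)
      ⟨CoxeterA.toPerm_injective m, CoxeterA.toPerm_surjective m⟩

theorem permCoxeterSystem_simple {m : ℕ} (i : Fin m) :
    (permCoxeterSystem m).simple i = swap i.castSucc i.succ :=
  CoxeterA.toPerm_simple i

section SpinRelations

variable {n : ℕ}

theorem zt_mul_zt : zt n * zt n = 1 :=
  PresentedGroup.one_of_mem (rels := spinRels n) (.inl (.inl (.inl (.inl rfl))))

theorem commute_zt_tt (i : Fin (n - 1)) : Commute (zt n) (tt n i) :=
  PresentedGroup.mk_eq_mk_of_mul_inv_mem (rels := spinRels n)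
    (.inl (.inl (.inl (.inr ⟨i, rfl⟩))))

theorem tt_mul_self (i : Fin (n - 1)) : tt n i * tt n i = zt n :=
  PresentedGroup.mk_eq_mk_of_mul_inv_mem (rels := spinRels n) (.inl (.inl (.inr ⟨i, rfl⟩)))

theorem tt_mul_tt {i j : Fin (n - 1)} (hij : 1 < |(i : ℤ) - (j : ℤ)|) :
    tt n i * tt n j = zt n * tt n j * tt n i :=
  PresentedGroup.mk_eq_mk_of_mul_inv_mem (rels := spinRels n) (.inl (.inr ⟨i, j, hij, rfl⟩))

theorem tt_braid {i j : Fin (n - 1)} (hij : (j : ℕ) = i + 1) :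
    tt n i * tt n j * tt n i = tt n j * tt n i * tt n j :=
  PresentedGroup.mk_eq_mk_of_mul_inv_mem (rels := spinRels n) (.inr ⟨i, j, hij, rfl⟩)

theorem lift_eq_one_of_mem_spinRels {G : Type*} [Group G] {t : Fin (n - 1) → G} {z : G}
    (hz : z * z = 1) (ht : ∀ i, t i * t i = z)
    (hcomm : ∀ i j : Fin (n - 1), 1 < |(i : ℤ) - (j : ℤ)| → t i * t j = z * t j * t i)
    (hbraid : ∀ i j : Fin (n - 1), (j : ℕ) = i + 1 → t i * t j * t i = t j * t i * t j) :
    ∀ r ∈ spinRels n, FreeGroup.lift (Sum.elim t fun _ => z) r = 1 := by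
  have hzF : FreeGroup.lift (Sum.elim t fun _ => z) (zF n) = z := FreeGroup.lift_apply_of
  have htF (i : Fin (n - 1)) : FreeGroup.lift (Sum.elim t fun _ => z) (tF n i) = t i :=
    FreeGroup.lift_apply_of
  rintro _ ((((rfl | ⟨i, rfl⟩) | ⟨i, rfl⟩) | ⟨i, j, hij, rfl⟩) | ⟨i, j, hij, rfl⟩)
  · rw [map_mul, hzF, hz]
  all_goals
    rw [map_mul, map_inv, mul_inv_eq_one]
    simp only [map_mul, hzF, htF]
  · rw [← ht i, mul_assoc]
  · exact ht i
  · exact hcomm i j hij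
  · exact hbraid i j hij

theorem zt_mem_center : zt n ∈ Subgroup.center (SpinSym n) := by
  have hcentralizer (g : SpinSym n) : g ∈ Subgroup.centralizer {zt n} := by
    refine PresentedGroup.generated_by _ _ (fun x => ?_) g
    rw [Subgroup.mem_centralizer_singleton_iff]
    rcases x with i | _
    · exact (commute_zt_tt i).symm
    · rfl
  exact Subgroup.mem_center_iff.mpr fun g =>
    Subgroup.mem_centralizer_singleton_iff.mp (hcentralizer g)

instance normal_zpowers_zt : (Subgroup.zpowers (zt n)).Normal where
  conj_mem x hx g := by
    have hcenter : x ∈ Subgroup.center (SpinSym n) :=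
      Subgroup.zpowers_le.mpr zt_mem_center hx
    rwa [Subgroup.mem_center_iff.mp hcenter g, mul_inv_cancel_right]

end SpinRelations

section Kernel

variable {m : ℕ} {G : Type*} [Group G]

theorem isLiftable_map_tt {f : SpinSym (m + 1) →* G} (hfz : f (zt (m + 1)) = 1) :
    (CoxeterMatrix.A m).IsLiftable fun i : Fin m => f (tt (m + 1) i) := by
  refine isLiftable_typeA_iff.mpr ⟨fun i => ?_, fun i j hij => ?_, fun i j hij => ?_⟩
  · rw [← map_mul, tt_mul_self, hfz]
  · have hdist : 1 < |(i : ℤ) - (j : ℤ)| := by rw [lt_abs]; omega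
    rw [commute_iff_eq, ← map_mul, tt_mul_tt hdist, map_mul, map_mul, hfz, one_mul]
  · simp only [← map_mul, tt_braid (n := m + 1) (i := i) (j := j) hij]

theorem exists_comp_eq_of_map_zt_eq_one {p : SpinSym (m + 1) →* Perm (Fin (m + 1))}
    (hpt : ∀ i, p (tt (m + 1) i) = swap (finL (m + 1) i) (finR (m + 1) i))
    (hpz : p (zt (m + 1)) = 1) {f : SpinSym (m + 1) →* G} (hfz : f (zt (m + 1)) = 1) :
    ∃ q : Perm (Fin (m + 1)) →* G, q.comp p = f := by
  let q : Perm (Fin (m + 1)) →* G := (permCoxeterSystem m).lift ⟨_, isLiftable_map_tt hfz⟩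
  have hq (i : Fin m) : q (swap i.castSucc i.succ) = f (tt (m + 1) i) := by
    rw [← permCoxeterSystem_simple]
    exact (permCoxeterSystem m).lift_apply_simple (isLiftable_map_tt hfz) i
  refine ⟨q, PresentedGroup.ext ?_⟩
  rintro (i | _)
  · exact (congrArg q (hpt i)).trans (hq i)
  · exact (congrArg q hpz).trans ((map_one q).trans hfz.symm)

theorem ker_le_zpowers_zt {p : SpinSym (m + 1) →* Perm (Fin (m + 1))}
    (hpt : ∀ i, p (tt (m + 1) i) = swap (finL (m + 1) i) (finR (m + 1) i))
    (hpz : p (zt (m + 1)) = 1) : p.ker ≤ Subgroup.zpowers (zt (m + 1)) := by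
  obtain ⟨q, hq⟩ := exists_comp_eq_of_map_zt_eq_one hpt hpz
    (f := QuotientGroup.mk' (Subgroup.zpowers (zt (m + 1))))
    ((QuotientGroup.eq_one_iff _).mpr (Subgroup.mem_zpowers _))
  calc p.ker ≤ (q.comp p).ker := by rw [← MonoidHom.comap_ker]; exact p.ker_le_comap _
    _ = Subgroup.zpowers (zt (m + 1)) := by rw [hq, QuotientGroup.ker_mk']

theorem mul_self_eq_zt_of_map_eq_swap {p : SpinSym (m + 1) →* Perm (Fin (m + 1))}
    (hpt : ∀ i, p (tt (m + 1) i) = swap (finL (m + 1) i) (finR (m + 1) i))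
    (hpz : p (zt (m + 1)) = 1) {i : Fin (m + 1 - 1)} {g : SpinSym (m + 1)}
    (hg : p g = swap (finL (m + 1) i) (finR (m + 1) i)) : g * g = zt (m + 1) := by
  obtain ⟨c, hc⟩ : (tt (m + 1) i)⁻¹ * g ∈ Subgroup.zpowers (zt (m + 1)) :=
    ker_le_zpowers_zt hpt hpz (by rw [MonoidHom.mem_ker, map_mul, map_inv, hpt, hg, inv_mul_cancel])
  have hcomm : Commute (tt (m + 1) i) (zt (m + 1) ^ c) := ((commute_zt_tt i).zpow_left c).symm
  calc g * g = tt (m + 1) i * zt (m + 1) ^ c * (tt (m + 1) i * zt (m + 1) ^ c) := by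
        rw [eq_mul_of_inv_mul_eq hc.symm]
    _ = tt (m + 1) i * tt (m + 1) i * (zt (m + 1) * zt (m + 1)) ^ c := by
        rw [hcomm.symm.mul_mul_mul_comm, (Commute.refl (zt (m + 1))).mul_zpow]
    _ = zt (m + 1) := by rw [tt_mul_self, zt_mul_zt, one_zpow, mul_one]

end Kernel

section CliffordAlgebra

theorem ι_mul_ι_mul_ι_eq_of_polar_eq_neg {R M : Type*} [CommRing R] [AddCommGroup M] [Module R M]
    {Q : QuadraticForm R M} {a b : M} (ha : QuadraticMap.polar Q a b = -Q a)
    (hb : QuadraticMap.polar Q a b = -Q b) :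
    CliffordAlgebra.ι Q a * CliffordAlgebra.ι Q b * CliffordAlgebra.ι Q a =
      CliffordAlgebra.ι Q b * CliffordAlgebra.ι Q a * CliffordAlgebra.ι Q b := by
  rw [CliffordAlgebra.ι_mul_ι_mul_ι, CliffordAlgebra.ι_mul_ι_mul_ι, QuadraticMap.polar_comm Q b a,
    ← neg_eq_iff_eq_neg.mpr ha, ← neg_eq_iff_eq_neg.mpr hb]
  congr 1
  module

/-- The negative definite form on `ℝⁿ` for which the simple roots `eᵢ - eᵢ₊₁` have value `-1`. -/
noncomputable def spinForm (n : ℕ) : QuadraticForm ℝ (Fin n → ℝ) :=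
  QuadraticMap.weightedSumSquares ℝ fun _ => (-1 / 2 : ℝ)

theorem polar_spinForm {n : ℕ} (x y : Fin n → ℝ) :
    QuadraticMap.polar (spinForm n) x y = -(x ⬝ᵥ y) := by
  simp only [QuadraticMap.polar, spinForm, QuadraticMap.weightedSumSquares_apply, dotProduct,
    ← Finset.sum_sub_distrib, ← Finset.sum_neg_distrib, Pi.add_apply, smul_eq_mul]
  exact Finset.sum_congr rfl fun _ _ => by ring

/-- The simple root `eᵢ - eᵢ₊₁`. -/
noncomputable def simpleRoot {n : ℕ} (i : Fin (n - 1)) : Fin n → ℝ :=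
  Pi.single (finL n i) 1 - Pi.single (finR n i) 1

variable {n : ℕ}

theorem simpleRoot_dotProduct (i j : Fin (n - 1)) :
    simpleRoot i ⬝ᵥ simpleRoot j =
      if i = j then 2 else if (j : ℕ) = i + 1 ∨ (i : ℕ) = j + 1 then -1 else 0 := by
  simp only [simpleRoot, sub_dotProduct, dotProduct_sub, single_dotProduct, Pi.single_apply, finL,
    finR, Fin.ext_iff, one_mul]
  split_ifs <;> first | omega | norm_num

theorem spinForm_simpleRoot (i : Fin (n - 1)) : spinForm n (simpleRoot i) = -1 := by
  have h := polar_spinForm (simpleRoot i) (simpleRoot i)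
  rw [QuadraticMap.polar_self, simpleRoot_dotProduct, if_pos rfl, two_nsmul] at h
  linarith

/-- The simple root `eᵢ - eᵢ₊₁` as an element of the Clifford algebra. -/
noncomputable def cliffordRoot (i : Fin (n - 1)) : CliffordAlgebra (spinForm n) :=
  CliffordAlgebra.ι (spinForm n) (simpleRoot i)

theorem cliffordRoot_mul_self (i : Fin (n - 1)) : cliffordRoot i * cliffordRoot i = -1 := by
  rw [cliffordRoot, CliffordAlgebra.ι_sq_scalar, spinForm_simpleRoot, map_neg, map_one]

theorem cliffordRoot_mul_cliffordRoot {i j : Fin (n - 1)} (hij : 1 < |(i : ℤ) - (j : ℤ)|) :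
    cliffordRoot i * cliffordRoot j = -(cliffordRoot j * cliffordRoot i) := by
  rw [lt_abs] at hij
  refine CliffordAlgebra.ι_mul_ι_comm_of_isOrtho (QuadraticMap.isOrtho_polarBilin.mp ?_)
  rw [QuadraticMap.polarBilin_apply_apply, polar_spinForm, simpleRoot_dotProduct,
    if_neg (by omega), if_neg (by omega), neg_zero]

theorem cliffordRoot_braid {i j : Fin (n - 1)} (hij : (j : ℕ) = i + 1) :
    cliffordRoot i * cliffordRoot j * cliffordRoot i =
      cliffordRoot j * cliffordRoot i * cliffordRoot j := by
  have hpolar : QuadraticMap.polar (spinForm n) (simpleRoot i) (simpleRoot j) = 1 := by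
    rw [polar_spinForm, simpleRoot_dotProduct, if_neg (by omega), if_pos (.inl hij), neg_neg]
  apply ι_mul_ι_mul_ι_eq_of_polar_eq_neg <;> rw [hpolar, spinForm_simpleRoot, neg_neg]

/-- The simple root `eᵢ - eᵢ₊₁` as a unit of the Clifford algebra. -/
noncomputable def cliffordUnit (i : Fin (n - 1)) : (CliffordAlgebra (spinForm n))ˣ where
  val := cliffordRoot i
  inv := -cliffordRoot i
  val_inv := by rw [mul_neg, cliffordRoot_mul_self, neg_neg]
  inv_val := by rw [neg_mul, cliffordRoot_mul_self, neg_neg]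

/-- The spin representation of `S̃ₙ`, which sends `τ̃ᵢ` to the simple root `eᵢ - eᵢ₊₁` and `z` to
`-1`. -/
noncomputable def spinRep (n : ℕ) : SpinSym n →* (CliffordAlgebra (spinForm n))ˣ :=
  PresentedGroup.toGroup <| lift_eq_one_of_mem_spinRels (t := cliffordUnit) (z := -1)
    (by rw [neg_mul_neg, one_mul])
    (fun i => Units.ext (cliffordRoot_mul_self i))
    (fun _ _ hij => Units.ext <| by
      rw [neg_one_mul, neg_mul]
      exact cliffordRoot_mul_cliffordRoot hij)
    (fun _ _ hij => Units.ext (cliffordRoot_braid hij))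

theorem spinRep_zt : spinRep n (zt n) = -1 :=
  PresentedGroup.toGroup.of _

theorem zt_ne_one : zt n ≠ 1 := by
  intro h
  have hunit : (-1 : (CliffordAlgebra (spinForm n))ˣ) = 1 := by rw [← spinRep_zt, h, map_one]
  have hreal : (-1 : ℝ) = 1 := (algebraMap ℝ (CliffordAlgebra (spinForm n))).injective <| by
    rw [map_neg, map_one]
    exact congrArg Units.val hunit
  norm_num at hreal

end CliffordAlgebra

theorem no_section_general (n : ℕ) (hn : 2 ≤ n) (p : SpinSym n →* Perm (Fin n))
    (hpt : ∀ i : Fin (n - 1), p (tt n i) = swap (finL n i) (finR n i)) (hpz : p (zt n) = 1) :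
    ¬ ∃ s : Perm (Fin n) →* SpinSym n, p.comp s = MonoidHom.id (Perm (Fin n)) := by
  rintro ⟨s, hs⟩
  obtain ⟨m, rfl⟩ : ∃ m, n = m + 1 := ⟨n - 1, by omega⟩
  let i : Fin (m + 1 - 1) := ⟨0, by omega⟩
  let σ : Perm (Fin (m + 1)) := swap (finL (m + 1) i) (finR (m + 1) i)
  have hsq : s σ * s σ = zt (m + 1) :=
    mul_self_eq_zt_of_map_eq_swap hpt hpz (DFunLike.congr_fun hs σ)
  apply zt_ne_one (n := m + 1)
  rw [← hsq, ← map_mul, swap_mul_self, map_one]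

theorem no_section (n : ℕ) (hn : 4 ≤ n)
    (p : SpinSym n →* Equiv.Perm (Fin n))
    (hpt : ∀ i : Fin (n-1), p (tt n i) = Equiv.swap (finL n i) (finR n i))
    (hpz : p (zt n) = 1) :
    ¬ ∃ s : Equiv.Perm (Fin n) →* SpinSym n, p.comp s = MonoidHom.id (Equiv.Perm (Fin n)) := by
  exact no_section_general n (by omega) p hpt hpz
end
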